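/- Let u₁, u₂, u₃ ∈ ℝ² be pairwise distinct unit vectors, directions of the three half-lines {s·uᵢ : s ≥ 0} of a conical triod with vertex at the origin. Let ρ be the counterclockwise rotation by 60°, W_k := ρ^k(2/√3, 0) for k = 0,…,5 the vertices of B^φ, and F_k the closed facet of B^φ joining W_k and W_{k+1} (indices mod 6). Then the triod is critical — i.e. there exist N₁, N₂, N₃ ∈ ℝ² with φ(Nᵢ) = 1, Nᵢ·uᵢ^⊥ = φ°(uᵢ^⊥) for each i, and N₁ + N₂ + N₃ = 0 — if and only if the three points uᵢ/φ(uᵢ) ∈ ∂B^φ lie in three pairwise non-adjacent facets of ∂B^φ, i.e. there exist k ∈ {0,…,5} and a bijection σ : {1,2,3} → {0,1,2} such that uᵢ/φ(uᵢ) ∈ F_{(k + 2σ(i)) mod 6} for each i. -/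

import Mathlib

/-- The crystalline norm `φ` whose unit ball is the regular hexagon circumscribed
to the unit circle with two horizontal facets. -/
noncomputable def phi (x : ℝ × ℝ) : ℝ :=
  max |x.2| (max (|Real.sqrt 3 * x.1 + x.2| / 2) (|Real.sqrt 3 * x.1 - x.2| / 2))

/-- The dual norm `φ°`. -/
noncomputable def phiD (ξ : ℝ × ℝ) : ℝ :=
  max (2 * |ξ.1| / Real.sqrt 3) (max |ξ.1 / Real.sqrt 3 + ξ.2| |ξ.1 / Real.sqrt 3 - ξ.2|)

/-- Counterclockwise rotation by 90°. -/
def perp (x : ℝ × ℝ) : ℝ × ℝ := (-x.2, x.1)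

/-- Euclidean scalar product on `ℝ × ℝ`. -/
def dot (x y : ℝ × ℝ) : ℝ := x.1 * y.1 + x.2 * y.2

/-- Counterclockwise rotation by 60°. -/
noncomputable def rot60 (x : ℝ × ℝ) : ℝ × ℝ :=
  (x.1 / 2 - Real.sqrt 3 / 2 * x.2, Real.sqrt 3 / 2 * x.1 + x.2 / 2)

/-- The `k`-th vertex `W_k = ρ^k (2/√3, 0)` of the Wulff shape `B^φ`. -/
noncomputable def wulffVertex (k : ℕ) : ℝ × ℝ := rot60^[k] ((2 / Real.sqrt 3 : ℝ), (0 : ℝ))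

/-- The `k`-th closed facet of `∂B^φ`, joining `W_k` and `W_{k+1}`. -/
noncomputable def wulffFacet (k : ℕ) : Set (ℝ × ℝ) :=
  segment ℝ (wulffVertex k) (wulffVertex (k + 1))

/-- First hexagonal coordinate. -/
def ca (x : ℝ × ℝ) : ℝ := x.2
/-- Second hexagonal coordinate. -/
noncomputable def cb (x : ℝ × ℝ) : ℝ := (Real.sqrt 3 * x.1 - x.2) / 2

/-- The norm in hexagonal coordinates. -/
noncomputable def hx (a b : ℝ) : ℝ := max |a| (max |a + b| |b|)

lemma s3pos : 0 < Real.sqrt 3 := Real.sqrt_pos.2 (by norm_num)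
lemma s3sq : Real.sqrt 3 * Real.sqrt 3 = 3 := Real.mul_self_sqrt (by norm_num)

lemma phi_eq (x : ℝ × ℝ) : phi x = hx (ca x) (cb x) := by
  unfold phi hx ca cb
  have h2 : ∀ y : ℝ, |y| / 2 = |y / 2| := fun y => by rw [abs_div]; norm_num
  rw [h2, h2]
  congr 3
  ring_nf

lemma phiD_eq (x : ℝ × ℝ) : phiD (perp x) = 2 / Real.sqrt 3 * hx (ca x) (cb x) := by
  have hs := s3pos
  have hq := s3sq
  have hc : 0 ≤ 2 / Real.sqrt 3 := by positivity
  unfold phiD hx ca cb perp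
  rw [mul_max_of_nonneg _ _ hc, mul_max_of_nonneg _ _ hc]
  have e : ∀ y : ℝ, 2 / Real.sqrt 3 * |y| = |2 / Real.sqrt 3 * y| := fun y => by
    rw [abs_mul, abs_of_nonneg hc]
  have e1 : 2 * |(-x.2, x.1).1| / Real.sqrt 3 = 2 / Real.sqrt 3 * |x.2| := by
    simp only [abs_neg]; ring
  have e2 : (-x.2, x.1).1 / Real.sqrt 3 + (-x.2, x.1).2
      = 2 / Real.sqrt 3 * ((Real.sqrt 3 * x.1 - x.2) / 2) := by
    simp only; field_simp; ring
  have e3 : (-x.2, x.1).1 / Real.sqrt 3 - (-x.2, x.1).2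
      = -(2 / Real.sqrt 3 * (x.2 + (Real.sqrt 3 * x.1 - x.2) / 2)) := by
    simp only; field_simp; ring
  rw [e1, e2, e3, abs_neg, e, e, e, max_comm |2 / Real.sqrt 3 * ((Real.sqrt 3 * x.1 - x.2) / 2)|]

lemma dot_eq (N x : ℝ × ℝ) :
    dot N (perp x) = 2 / Real.sqrt 3 * (ca N * cb x - cb N * ca x) := by
  have hs := s3pos
  unfold dot perp ca cb
  field_simp
  ring

lemma crit_iff (N x : ℝ × ℝ) : dot N (perp x) = phiD (perp x) ↔
    ca N * cb x - cb N * ca x = hx (ca x) (cb x) := by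
  have hs := s3pos
  rw [dot_eq, phiD_eq]
  have hc : 2 / Real.sqrt 3 ≠ 0 := by positivity
  exact mul_right_inj' hc

lemma hex_ext (x y : ℝ × ℝ) : x = y ↔ ca x = ca y ∧ cb x = cb y := by
  have hs := s3pos
  constructor
  · rintro rfl; simp
  · unfold ca cb
    rintro ⟨h1, h2⟩
    have : Real.sqrt 3 * x.1 = Real.sqrt 3 * y.1 := by linarith
    exact Prod.ext (mul_left_cancel₀ hs.ne' this) h1

lemma ca_add (x y : ℝ × ℝ) : ca (x + y) = ca x + ca y := rfl
lemma cb_add (x y : ℝ × ℝ) : cb (x + y) = cb x + cb y := by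
  simp only [cb, Prod.fst_add, Prod.snd_add]; ring
lemma ca_smul (r : ℝ) (y : ℝ × ℝ) : ca (r • y) = r * ca y := rfl
lemma cb_smul (r : ℝ) (y : ℝ × ℝ) : cb (r • y) = r * cb y := by
  simp only [cb, Prod.smul_fst, Prod.smul_snd, smul_eq_mul]; ring

lemma ca_rot (x : ℝ × ℝ) : ca (rot60 x) = ca x + cb x := by
  simp only [ca, cb, rot60]; ring
lemma cb_rot (x : ℝ × ℝ) : cb (rot60 x) = - ca x := by
  simp only [ca, cb, rot60]; linear_combination (-x.2 / 4) * s3sq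

lemma W_zero : ca (wulffVertex 0) = 0 ∧ cb (wulffVertex 0) = 1 := by
  have hs := s3pos
  simp only [wulffVertex, Function.iterate_zero, id, ca, cb, true_and]
  field_simp
  norm_num

lemma W_succ (k : ℕ) : ca (wulffVertex (k + 1)) = ca (wulffVertex k) + cb (wulffVertex k) ∧
    cb (wulffVertex (k + 1)) = - ca (wulffVertex k) := by
  simp only [wulffVertex, Function.iterate_succ_apply', ca_rot, cb_rot, and_self]

/-- The closed cone over the facet `F_k`. -/
def Cn (k : ℕ) (a b : ℝ) : Prop :=
  match k with
  | 0 => 0 ≤ a ∧ 0 ≤ b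
  | 1 => b ≤ 0 ∧ 0 ≤ a + b
  | 2 => 0 ≤ a ∧ a + b ≤ 0
  | 3 => a ≤ 0 ∧ b ≤ 0
  | 4 => 0 ≤ b ∧ a + b ≤ 0
  | _ => a ≤ 0 ∧ 0 ≤ a + b

/-- The half-open facet `[W_k, W_{k+1})`. -/
def Hf (k : ℕ) (a b : ℝ) : Prop :=
  match k with
  | 0 => 0 ≤ a ∧ 0 < b ∧ a + b = 1
  | 1 => a = 1 ∧ b ≤ 0 ∧ 0 < a + b
  | 2 => b = -1 ∧ 0 < a ∧ a + b ≤ 0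
  | 3 => a ≤ 0 ∧ b < 0 ∧ a + b = -1
  | 4 => a = -1 ∧ 0 ≤ b ∧ a + b < 0
  | _ => b = 1 ∧ a < 0 ∧ 0 ≤ a + b

lemma hx_cases (a b : ℝ) : 
    |a| ≤ hx a b ∧ |a + b| ≤ hx a b ∧ |b| ≤ hx a b ∧
    (hx a b = |a| ∨ hx a b = |a+b| ∨ hx a b = |b|) := by
  unfold hx
  refine ⟨le_max_left _ _, (le_max_left _ _).trans (le_max_right _ _),
    (le_max_right _ _).trans (le_max_right _ _), ?_⟩
  rcases max_choice |a| (max |a + b| |b|) with h | h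
  · exact Or.inl h
  · rcases max_choice |a+b| |b| with h' | h'
    · exact Or.inr (Or.inl (h.trans h'))
    · exact Or.inr (Or.inr (h.trans h'))

lemma hx_lin (a b : ℝ) : 
    a ≤ hx a b ∧ -a ≤ hx a b ∧ a + b ≤ hx a b ∧ -(a+b) ≤ hx a b ∧ b ≤ hx a b ∧ -b ≤ hx a b ∧
    (hx a b = a ∨ hx a b = -a ∨ hx a b = a + b ∨ hx a b = -(a + b) ∨ hx a b = b ∨ hx a b = -b) := by
  obtain ⟨h1, h2, h3, h⟩ := hx_cases a b
  rw [abs_le'] at h1 h2 h3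
  refine ⟨h1.1, h1.2, h2.1, h2.2, h3.1, h3.2, ?_⟩
  rcases h with h | h | h
  · rcases abs_choice a with h' | h' <;> rw [h'] at h <;> simp [h]
  · rcases abs_choice (a+b) with h' | h' <;> rw [h'] at h <;> tauto
  · rcases abs_choice b with h' | h' <;> rw [h'] at h <;> tauto

lemma hx_pos (x : ℝ × ℝ) (h : x.1 ^ 2 + x.2 ^ 2 = 1) : 0 < hx (ca x) (cb x) := by
  obtain ⟨h1, h2, h3, h4, h5, h6, -⟩ := hx_lin (ca x) (cb x)
  by_contra hn
  have ha : ca x = 0 := by linarith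
  have hb : cb x = 0 := by linarith
  have : x = 0 := by
    rw [hex_ext, ha, hb]
    simp [ca, cb]
  subst this
  norm_num at h

lemma facet_iff (k : ℕ) (hk : k < 6) (x : ℝ × ℝ) (h : x.1 ^ 2 + x.2 ^ 2 = 1) :
    (phi x)⁻¹ • x ∈ wulffFacet k ↔ Cn k (ca x) (cb x) := by
  have hp := hx_pos x h
  obtain ⟨h1, h2, h3, h4, h5, h6, h7⟩ := hx_lin (ca x) (cb x)
  rw [phi_eq]
  unfold wulffFacet segment
  simp only [Set.mem_ofPred_eq, hex_ext, ca_add, cb_add, ca_smul, cb_smul]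
  generalize ca x = a at *
  generalize cb x = b at *
  generalize hx a b = p at *
  have key : ∀ α β γ δ : ℝ, (∃ s t : ℝ, 0 ≤ s ∧ 0 ≤ t ∧ s + t = 1 ∧
      s * α + t * γ = p⁻¹ * a ∧ s * β + t * δ = p⁻¹ * b) ↔
      (∃ s t : ℝ, 0 ≤ s ∧ 0 ≤ t ∧ s + t = p ∧ s * α + t * γ = a ∧ s * β + t * δ = b) := by
    intro α β γ δ
    constructor
    · rintro ⟨s, t, hs, ht, hst, e1, e2⟩
      refine ⟨p * s, p * t, by positivity, by positivity, by rw [← mul_add, hst, mul_one], ?_, ?_⟩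
      · rw [mul_assoc, mul_assoc, ← mul_add, e1]; field_simp
      · rw [mul_assoc, mul_assoc, ← mul_add, e2]; field_simp
    · rintro ⟨s, t, hs, ht, hst, e1, e2⟩
      refine ⟨p⁻¹ * s, p⁻¹ * t, by positivity, by positivity, ?_, ?_, ?_⟩
      · rw [← mul_add, hst]; field_simp
      · rw [← e1]; ring
      · rw [← e2]; ring
  rw [key]
  have w0 := W_zero
  have w1 := W_succ 0
  have w2 := W_succ 1
  have w3 := W_succ 2
  have w4 := W_succ 3
  have w5 := W_succ 4
  have w6 := W_succ 5
  norm_num [w0.1, w0.2] at w1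
  norm_num [w1.1, w1.2] at w2
  norm_num [w2.1, w2.2] at w3
  norm_num [w3.1, w3.2] at w4
  norm_num [w4.1, w4.2] at w5
  norm_num [w5.1, w5.2] at w6
  interval_cases k
  · norm_num only [w0, w1, Cn]
    constructor
    · rintro ⟨s, t, hs, ht, hst, e1, e2⟩; constructor <;> linarith
    · rintro ⟨c1, c2⟩
      exact ⟨b, a, by linarith, by linarith, by grind, by ring, by ring⟩
  · norm_num only [w1, w2, Cn]
    constructor
    · rintro ⟨s, t, hs, ht, hst, e1, e2⟩; constructor <;> linarith
    · rintro ⟨c1, c2⟩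
      exact ⟨a + b, -b, by linarith, by linarith, by grind, by ring, by ring⟩
  · norm_num only [w2, w3, Cn]
    constructor
    · rintro ⟨s, t, hs, ht, hst, e1, e2⟩; constructor <;> linarith
    · rintro ⟨c1, c2⟩
      exact ⟨a, -(a + b), by linarith, by linarith, by grind, by ring, by ring⟩
  · norm_num only [w3, w4, Cn]
    constructor
    · rintro ⟨s, t, hs, ht, hst, e1, e2⟩; constructor <;> linarith
    · rintro ⟨c1, c2⟩
      exact ⟨-b, -a, by linarith, by linarith, by grind, by ring, by ring⟩
  · norm_num only [w4, w5, Cn]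
    constructor
    · rintro ⟨s, t, hs, ht, hst, e1, e2⟩; constructor <;> linarith
    · rintro ⟨c1, c2⟩
      exact ⟨-(a + b), b, by linarith, by linarith, by grind, by ring, by ring⟩
  · norm_num only [w5, w6, Cn]
    constructor
    · rintro ⟨s, t, hs, ht, hst, e1, e2⟩; constructor <;> linarith
    · rintro ⟨c1, c2⟩
      exact ⟨-a, a + b, by linarith, by linarith, by grind, by ring, by ring⟩

/-- Every point of the hexagon lies in a half-open facet. -/
lemma exists_Hf (a b : ℝ) (h : hx a b = 1) : ∃ m < 6, Hf m a b := by
  obtain ⟨h1, h2, h3, h4, h5, h6, h7⟩ := hx_lin a b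
  rw [h] at *
  by_cases c0 : Hf 0 a b
  · exact ⟨0, by norm_num, c0⟩
  by_cases c1 : Hf 1 a b
  · exact ⟨1, by norm_num, c1⟩
  by_cases c2 : Hf 2 a b
  · exact ⟨2, by norm_num, c2⟩
  by_cases c3 : Hf 3 a b
  · exact ⟨3, by norm_num, c3⟩
  by_cases c4 : Hf 4 a b
  · exact ⟨4, by norm_num, c4⟩
  refine ⟨5, by norm_num, ?_⟩
  simp only [Hf] at *
  rcases h7 with h7 | h7 | h7 | h7 | h7 | h7 <;> grind (splits := 20)

/-- Balanced triples lie in alternating half-open facets. -/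
lemma balanced (a b c d e f : ℝ) (h0 : hx a b = 1) (h1 : hx c d = 1) (h2 : hx e f = 1)
    (s : a + c + e = 0) (t : b + d + f = 0) :
    ∃ m < 6, Hf m a b ∧ ((Hf ((m + 2) % 6) c d ∧ Hf ((m + 4) % 6) e f) ∨
      (Hf ((m + 4) % 6) c d ∧ Hf ((m + 2) % 6) e f)) := by
  obtain ⟨m, hm, H0⟩ := exists_Hf a b h0
  obtain ⟨n, hn, H1⟩ := exists_Hf c d h1
  obtain ⟨l, hl, H2⟩ := exists_Hf e f h2
  refine ⟨m, hm, H0, ?_⟩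
  have key : (n = (m + 2) % 6 ∧ l = (m + 4) % 6) ∨ (n = (m + 4) % 6 ∧ l = (m + 2) % 6) := by
    interval_cases m <;> interval_cases n <;> interval_cases l <;> first
      | (norm_num; done)
      | (exfalso; simp only [Hf] at H0 H1 H2; obtain ⟨_, _, _⟩ := H0; obtain ⟨_, _, _⟩ := H1
         obtain ⟨_, _, _⟩ := H2; linarith)
  rcases key with ⟨rfl, rfl⟩ | ⟨rfl, rfl⟩
  · exact Or.inl ⟨H1, H2⟩
  · exact Or.inr ⟨H1, H2⟩

/-- If `N` is in the half-open facet `m`, then `u` is in the cone `m + 4`. -/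
lemma cone_of_Hf (m : ℕ) (hm : m < 6) (A B a b : ℝ) (H : Hf m A B)
    (h : A * b - B * a = hx a b) : Cn ((m + 4) % 6) a b := by
  obtain ⟨h1, h2, h3, h4, h5, h6, -⟩ := hx_lin a b
  have key : ∀ s t p q : ℝ, 0 < s → 0 ≤ t → s + t = 1 → p ≤ hx a b → q ≤ hx a b →
      s * p + t * q = hx a b → p = hx a b := by
    intro s t p q hs ht hst hp hq e
    have e2 : s * (hx a b - p) + t * (hx a b - q) = 0 := by
      linear_combination hx a b * hst - e
    have k1 := mul_nonneg hs.le (sub_nonneg.2 hp)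
    have k2 := mul_nonneg ht (sub_nonneg.2 hq)
    have k3 : s * (hx a b - p) = 0 := by linarith
    rcases mul_eq_zero.1 k3 with k | k
    · exact absurd k hs.ne'
    · linarith
  interval_cases m <;> simp only [Hf] at H <;> obtain ⟨H1, H2, H3⟩ := H <;> norm_num [Cn]
  · have k := key B A (-a) b (by linarith) (by linarith) (by linarith) (by linarith)
      (by linarith) (by linarith)
    constructor <;> linarith
  · have k := key (A+B) (-B) b (a+b) (by linarith) (by linarith) (by linarith) (by linarith)
      (by linarith) (by linarith)
    constructor <;> linarith
  · have k := key A (-(A+B)) (a+b) a (by linarith) (by linarith) (by linarith) (by linarith)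
      (by linarith) (by linarith)
    constructor <;> linarith
  · have k := key (-B) (-A) a (-b) (by linarith) (by linarith) (by linarith) (by linarith)
      (by linarith) (by linarith)
    constructor <;> linarith
  · have k := key (-(A+B)) B (-b) (-(a+b)) (by linarith) (by linarith) (by linarith) (by linarith)
      (by linarith) (by linarith)
    constructor <;> linarith
  · have k := key (-A) (A+B) (-(a+b)) (-a) (by linarith) (by linarith) (by linarith) (by linarith)
      (by linarith) (by linarith)
    constructor <;> linarith

/-- The vertex selection. -/
lemma vertex_of_cone (m : ℕ) (hm : m < 6) (x : ℝ × ℝ) (H : Cn m (ca x) (cb x)) :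
    phi (wulffVertex (m + 2)) = 1 ∧ dot (wulffVertex (m + 2)) (perp x) = phiD (perp x) := by
  obtain ⟨h1, h2, h3, h4, h5, h6, h7⟩ := hx_lin (ca x) (cb x)
  rw [crit_iff, phi_eq]
  have w0 := W_zero
  have w1 := W_succ 0
  have w2 := W_succ 1
  have w3 := W_succ 2
  have w4 := W_succ 3
  have w5 := W_succ 4
  have w6 := W_succ 5
  have w7 := W_succ 6
  norm_num [w0.1, w0.2] at w1
  norm_num [w1.1, w1.2] at w2
  norm_num [w2.1, w2.2] at w3
  norm_num [w3.1, w3.2] at w4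
  norm_num [w4.1, w4.2] at w5
  norm_num [w5.1, w5.2] at w6
  norm_num [w6.1, w6.2] at w7
  interval_cases m <;> simp only [Cn] at H <;> norm_num [w2, w3, w4, w5, w6, w7] <;>
    refine ⟨by norm_num [hx], ?_⟩ <;> grind

lemma W_mod (k : ℕ) : wulffVertex (k + 6) = wulffVertex k := by
  rw [hex_ext]
  have w1 := W_succ k
  have w2 := W_succ (k+1)
  have w3 := W_succ (k+2)
  have w4 := W_succ (k+3)
  have w5 := W_succ (k+4)
  have w6 := W_succ (k+5)
  simp only [add_assoc, Nat.reduceAdd] at *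
  grind

lemma W_sum (k : ℕ) : wulffVertex k + wulffVertex (k + 2) + wulffVertex (k + 4) = 0 := by
  rw [hex_ext]
  have w1 := W_succ k
  have w2 := W_succ (k+1)
  have w3 := W_succ (k+2)
  have w4 := W_succ (k+3)
  simp only [add_assoc, Nat.reduceAdd] at *
  have e1 : ca (0 : ℝ × ℝ) = 0 := rfl
  have e2 : cb (0 : ℝ × ℝ) = 0 := by simp [cb]
  simp only [ca_add, cb_add, e1, e2]
  grind

/-- A conical triod with half-line directions `u 0, u 1, u 2` is critical (admits a
balanced Cahn–Hoffman triple) if and only if the three points `uᵢ/φ(uᵢ) ∈ ∂B^φ` lie in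
three pairwise non-adjacent facets of `∂B^φ`. -/
theorem conical_triod_critical_iff_nonadjacent_facets
    (u : Fin 3 → ℝ × ℝ)
    (hunit : ∀ i, (u i).1 ^ 2 + (u i).2 ^ 2 = 1)
    (hdist : ∀ i j, i ≠ j → u i ≠ u j) :
    (∃ N : Fin 3 → ℝ × ℝ,
        (∀ i, phi (N i) = 1 ∧ dot (N i) (perp (u i)) = phiD (perp (u i))) ∧
        N 0 + N 1 + N 2 = 0) ↔
    (∃ k : ℕ, k < 6 ∧ ∃ σ : Fin 3 ≃ Fin 3,
        ∀ i, (phi (u i))⁻¹ • u i ∈ wulffFacet ((k + 2 * (σ i : ℕ)) % 6)) := by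
  have hf : ∀ k i, (phi (u i))⁻¹ • u i ∈ wulffFacet (k % 6) ↔
      Cn (k % 6) (ca (u i)) (cb (u i)) := fun k i =>
    facet_iff _ (Nat.mod_lt _ (by norm_num)) _ (hunit i)
  simp only [hf]
  constructor
  · rintro ⟨N, hN, hs⟩
    simp only [crit_iff, phi_eq] at hN
    rw [hex_ext] at hs
    have e1 : ca (0 : ℝ × ℝ) = 0 := rfl
    have e2 : cb (0 : ℝ × ℝ) = 0 := by simp [cb]
    simp only [ca_add, cb_add, e1, e2] at hs
    obtain ⟨m, hm, H0, H⟩ := balanced _ _ _ _ _ _ (hN 0).1 (hN 1).1 (hN 2).1 hs.1 hs.2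
    have all3 : ∀ P : Fin 3 → Prop, P 0 → P 1 → P 2 → ∀ i, P i := by
      intro P p0 p1 p2 i
      fin_cases i
      · exact p0
      · exact p1
      · exact p2
    have hlt : ∀ j, j % 6 < 6 := fun j => Nat.mod_lt _ (by norm_num)
    have c0 := cone_of_Hf _ hm _ _ _ _ H0 (hN 0).2
    refine ⟨(m + 4) % 6, hlt _, ?_⟩
    rcases H with ⟨H1, H2⟩ | ⟨H1, H2⟩
    · have c1 := cone_of_Hf _ (hlt _) _ _ _ _ H1 (hN 1).2
      have c2 := cone_of_Hf _ (hlt _) _ _ _ _ H2 (hN 2).2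
      refine ⟨Equiv.refl _, all3 _ ?_ ?_ ?_⟩
      · convert c0 using 1; simp
      · convert c1 using 1; simp only [Equiv.refl_apply, Fin.val_one]; omega
      · convert c2 using 1; simp only [Equiv.refl_apply, Fin.val_two]; try omega
    · have c1 := cone_of_Hf _ (hlt _) _ _ _ _ H1 (hN 1).2
      have c2 := cone_of_Hf _ (hlt _) _ _ _ _ H2 (hN 2).2
      refine ⟨Equiv.swap 1 2, all3 _ ?_ ?_ ?_⟩
      · rw [show (Equiv.swap (1 : Fin 3) 2) 0 = 0 from by decide]
        convert c0 using 1; simp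
      · rw [Equiv.swap_apply_left]
        convert c1 using 1; simp only [Fin.val_two]; try omega
      · rw [Equiv.swap_apply_right]
        convert c2 using 1; simp only [Fin.val_one]; omega
  · rintro ⟨k, hk, σ, h⟩
    have hmod : ∀ j, j < 12 → wulffVertex (j % 6 + 2) = wulffVertex (j + 2) := by
      intro j hj
      rcases Nat.lt_or_ge j 6 with h | h
      · rw [Nat.mod_eq_of_lt h]
      · obtain ⟨i, rfl⟩ := Nat.exists_eq_add_of_le' h
        have hi : i < 6 := by omega
        rw [Nat.add_mod_right, Nat.mod_eq_of_lt hi, add_right_comm, W_mod]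
    refine ⟨fun i => wulffVertex (k + 2 * (σ i : ℕ) + 2), fun i => ?_, ?_⟩
    · have := vertex_of_cone _ (Nat.mod_lt _ (by norm_num)) _ (h i)
      rwa [hmod _ (by have := (σ i).2; omega)] at this
    · have hsum : ∑ i, wulffVertex (k + 2 * (σ i : ℕ) + 2) = 0 := by
        rw [Equiv.sum_comp σ (fun j : Fin 3 => wulffVertex (k + 2 * (j : ℕ) + 2)),
          Fin.sum_univ_three]
        have := W_sum (k + 2)
        simpa [add_assoc, add_comm, add_left_comm] using this
      rw [Fin.sum_univ_three] at hsum
      exact hsum
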